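/- arXiv:2510.07643 — 2 statements merged into one kernel-verified Lean document; each statement's English description precedes it below -/
import Mathlib

section
/- For any coprime positive integers a and u with a ≠ u, the cuboid polynomial P_{a,u}(t) does not factor in ℤ[t] as a product of a polynomial of degree 2 and a polynomial of degree 6. -/
open Polynomial

/-- The cuboid polynomial `P_{a,u}(t) = t⁸ + 6Δ t⁶ + (Δ² − 2a²u²) t⁴ − 6Δ a²u² t² + a⁴u⁴`,
where `Δ = u² − a²`. -/
noncomputable def cuboidPoly (a u : ℤ) : Polynomial ℤ :=
  X ^ 8 + C (6 * (u ^ 2 - a ^ 2)) * X ^ 6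
    + C ((u ^ 2 - a ^ 2) ^ 2 - 2 * a ^ 2 * u ^ 2) * X ^ 4
    + C (-(6 * (u ^ 2 - a ^ 2) * (a ^ 2 * u ^ 2))) * X ^ 2
    + C (a ^ 4 * u ^ 4)

/-!
Write `P_{a,u}(t) = Q(t²)` with `Q = (s² + 3Δs - m²)² - 8Δ²s²`, `m = au`. A factor `t² + bt + c`
of `P_{a,u}` yields either the root `-c` of `Q` (when `b = 0`), or the factor
`s² + (2c - b²)s + c²` of `Q` whose roots are the squares of those of `t² + bt + c`.
A root of `Q` would make `2` a square. A factor of `Q` with constant term `c²` forces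
`c⁴ + 34c²m² + m⁴` to be a square, which in turn makes `x² + 3y²` and `x² + 4y²` simultaneously
squares for some `y ≠ 0`; this is impossible by infinite descent on `y`.
-/

section IntegrallyClosed

variable {R : Type*} [CommRing R] [IsDomain R] [IsIntegrallyClosed R]

theorem isSquare_of_isSquare_sq_mul {x n : R} (hx : x ≠ 0) (h : IsSquare (x ^ 2 * n)) :
    IsSquare n := by
  obtain ⟨z, hz⟩ := h
  obtain ⟨k, rfl⟩ : x ∣ z :=
    (IsIntegrallyClosed.pow_dvd_pow_iff two_ne_zero).mp ⟨n, by rw [hz, sq]⟩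
  exact ⟨k, mul_left_cancel₀ (pow_ne_zero 2 hx) (by rw [hz]; ring)⟩

end IntegrallyClosed

theorem exists_eq_mul_of_mul_eq_mul {M : Type*} [CommMonoidWithZero M] [IsCancelMulZero M]
    [DecompositionMonoid M] {p q r s : M} (h : p * q = r * s) (hp : p ≠ 0) :
    ∃ α β γ δ, p = α * β ∧ q = γ * δ ∧ r = α * γ ∧ s = β * δ := by
  obtain ⟨α, β, ⟨γ, rfl⟩, ⟨δ, rfl⟩, rfl⟩ := exists_dvd_and_dvd_of_dvd_mul ⟨q, h.symm⟩
  exact ⟨α, β, γ, δ, rfl, mul_left_cancel₀ hp (h.trans (mul_mul_mul_comm α γ β δ)), rfl, rfl⟩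

theorem mul_self_emod_eight (z : ℤ) : z * z % 8 = 0 ∨ z * z % 8 = 1 ∨ z * z % 8 = 4 := by
  have hz : z % 8 = 0 ∨ z % 8 = 1 ∨ z % 8 = 2 ∨ z % 8 = 3 ∨ z % 8 = 4 ∨ z % 8 = 5 ∨ z % 8 = 6 ∨
      z % 8 = 7 := by omega
  rcases hz with h | h | h | h | h | h | h | h <;> simp [Int.mul_emod, h]

section Concordant

/-- Euler's concordant forms: `x² + my²` and `x² + ny²` are both squares. The trivial
solutions with `y = 0` are allowed. -/
def IsConcordant (m n x y : ℤ) : Prop :=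
  IsSquare (x ^ 2 + m * y ^ 2) ∧ IsSquare (x ^ 2 + n * y ^ 2)

variable {m n x y : ℤ}

theorem IsConcordant.of_mul_right {g : ℤ} (hg : g ≠ 0) (h : IsConcordant m n (x * g) (y * g)) :
    IsConcordant m n x y := by
  obtain ⟨⟨r, hr⟩, ⟨s, hs⟩⟩ := h
  exact ⟨isSquare_of_isSquare_sq_mul hg ⟨r, by linear_combination hr⟩,
    isSquare_of_isSquare_sq_mul hg ⟨s, by linear_combination hs⟩⟩

theorem IsConcordant.exists_isCoprime (h : IsConcordant m n x y) (hy : y ≠ 0) :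
    ∃ x' y', IsConcordant m n x' y' ∧ IsCoprime x' y' ∧ y' ≠ 0 ∧ y' ∣ y := by
  obtain ⟨g, x', y', -, hgcd, rfl, rfl⟩ := Int.exists_gcd_one' (Int.gcd_pos_of_ne_zero_right x hy)
  exact ⟨x', y', h.of_mul_right (right_ne_zero_of_mul hy), Int.isCoprime_iff_gcd_eq_one.mpr hgcd,
    left_ne_zero_of_mul hy, Dvd.intro _ rfl⟩

theorem even_of_isConcordant_three_four (h : IsConcordant 3 4 x y) : Even y := by
  obtain ⟨⟨a, ha⟩, ⟨c, hc⟩⟩ := h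
  by_contra hy
  have hy8 := Int.eight_dvd_sq_sub_one_of_odd (Int.not_even_iff_odd.mp hy)
  -- `x² + 3y² ≡ 3 (mod 4)` if `x` is even, and `x² + 4y² ≡ 5 (mod 8)` if `x` is odd.
  grind [mul_self_emod_eight a, mul_self_emod_eight c, mul_self_emod_eight x]

theorem exists_parameters_of_isConcordant_three_four (h : IsConcordant 3 4 x y)
    (hxy : IsCoprime x y) (hy : y ≠ 0) :
    ∃ p q r s : ℤ, y = 2 * p * q ∧ p * q = r * s ∧ 4 * p ^ 2 + q ^ 2 = r ^ 2 + s ^ 2 ∧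
      Odd q ∧ IsCoprime r s := by
  have y_even : Even y := even_of_isConcordant_three_four h
  obtain ⟨⟨a, ha⟩, ⟨c, hc⟩⟩ := h
  have hx2 : IsCoprime x 2 := hxy.of_isCoprime_of_dvd_right y_even.two_dvd
  have x_odd : Odd x := Int.isCoprime_two_right.mp hx2
  have a_odd : Odd a := by
    have : Odd (a * a) := by
      rw [← ha]
      exact x_odd.pow.add_even ((y_even.pow_of_ne_zero two_ne_zero).mul_left 3)
    exact (Int.odd_mul.mp this).1
  have hay : IsCoprime a y := by
    have : IsCoprime (a * a) y := by
      rw [← ha, show x ^ 2 + 3 * y ^ 2 = x ^ 2 + y * (3 * y) by ring]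
      exact hxy.pow_left.add_mul_left_left _
    exact this.of_mul_left_left
  have c_pos : 0 < |c| := abs_pos.mpr (by rintro rfl; nlinarith [sq_pos_of_ne_zero hy, sq_nonneg x])
  have triple_x : PythagoreanTriple x (2 * y) |c| := by
    rw [PythagoreanTriple, abs_mul_abs_self]; linarith
  have triple_a : PythagoreanTriple a y |c| := by
    rw [PythagoreanTriple, abs_mul_abs_self]; linarith
  obtain ⟨p, q, -, hpq, hcpq, -, parity, -⟩ := triple_x.coprime_classification'
    (Int.isCoprime_iff_gcd_eq_one.mp (hx2.mul_right hxy)) (Int.odd_iff.mp x_odd) c_pos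
  obtain ⟨r, s, -, hrs, hcrs, gcd_rs, -, -⟩ := triple_a.coprime_classification'
    (Int.isCoprime_iff_gcd_eq_one.mp hay) (Int.odd_iff.mp a_odd) c_pos
  have coprime_rs := Int.isCoprime_iff_gcd_eq_one.mpr gcd_rs
  rcases parity with ⟨hp, hq⟩ | ⟨hp, hq⟩
  · obtain ⟨p, rfl⟩ := Int.dvd_of_emod_eq_zero hp
    exact ⟨p, q, r, s, by linarith, by linarith, by linarith, Int.odd_iff.mpr hq, coprime_rs⟩
  · obtain ⟨q, rfl⟩ := Int.dvd_of_emod_eq_zero hq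
    exact ⟨q, p, r, s, by linarith, by linarith, by linarith, Int.odd_iff.mpr hp, coprime_rs⟩

theorem isConcordant_or_isConcordant_of_sq_mul_eq {α β γ δ : ℤ} (hαδ : IsCoprime α δ)
    (hβγ : IsCoprime β γ) (hα : α ≠ 0) (hγ : Odd γ) (hδ : Odd δ)
    (h : α ^ 2 * (4 * β ^ 2 - γ ^ 2) = δ ^ 2 * (β ^ 2 - γ ^ 2)) :
    IsConcordant 3 4 δ β ∨ IsConcordant 3 4 γ α := by
  obtain ⟨κ, hκα⟩ : α ^ 2 ∣ β ^ 2 - γ ^ 2 :=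
    (hαδ.pow (m := 2) (n := 2)).dvd_of_dvd_mul_left ⟨_, h.symm⟩
  have hκδ : 4 * β ^ 2 - γ ^ 2 = κ * δ ^ 2 :=
    mul_left_cancel₀ (pow_ne_zero 2 hα) (by linear_combination h + δ ^ 2 * hκα)
  have κ_dvd_three : κ ∣ 3 := by
    obtain ⟨v, w, hvw⟩ := hβγ.pow (m := 2) (n := 2)
    exact ⟨v * (δ ^ 2 - α ^ 2) + w * (δ ^ 2 - 4 * α ^ 2),
      by linear_combination -3 * hvw + (v + w) * hκδ - (v + 4 * w) * hκα⟩
  have κ_mod_four : κ % 4 = 3 := by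
    have hγ4 := Int.sq_mod_four_eq_one_of_odd hγ
    have hδ4 := Int.sq_mod_four_eq_one_of_odd hδ
    have : κ * δ ^ 2 % 4 = κ % 4 := by rw [Int.mul_emod, hδ4]; simp
    omega
  have κ_cases : κ = -1 ∨ κ = 3 := by
    have := Int.le_of_dvd three_pos κ_dvd_three
    have := Int.le_of_dvd three_pos (neg_dvd.mpr κ_dvd_three)
    omega
  rcases κ_cases with rfl | rfl
  · exact Or.inl ⟨⟨α, by linarith⟩, ⟨γ, by linarith⟩⟩
  · exact Or.inr ⟨⟨β, by linarith⟩, ⟨δ, by linarith⟩⟩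

theorem exists_isConcordant_dvd_of_mul_eq_mul {p q r s : ℤ} (hmul : p * q = r * s)
    (hsq : 4 * p ^ 2 + q ^ 2 = r ^ 2 + s ^ 2) (hp : p ≠ 0) (hq : Odd q) (hrs : IsCoprime r s) :
    ∃ x y : ℤ, IsConcordant 3 4 x y ∧ y ∣ p := by
  obtain ⟨α, β, γ, δ, rfl, rfl, rfl, rfl⟩ := exists_eq_mul_of_mul_eq_mul hmul hp
  have ⟨hγ, hδ⟩ := Int.odd_mul.mp hq
  have hαδ : IsCoprime α δ := hrs.of_mul_left_left.of_mul_right_right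
  have hβγ : IsCoprime β γ := hrs.symm.of_mul_left_left.of_mul_right_right
  rcases isConcordant_or_isConcordant_of_sq_mul_eq hαδ hβγ (left_ne_zero_of_mul hp) hγ hδ
    (by linear_combination hsq) with h | h
  · exact ⟨δ, β, h, Dvd.intro_left α rfl⟩
  · exact ⟨γ, α, h, Dvd.intro β rfl⟩

theorem exists_natAbs_lt_of_isConcordant_three_four (h : IsConcordant 3 4 x y) (hy : y ≠ 0) :
    ∃ x' y', IsConcordant 3 4 x' y' ∧ y' ≠ 0 ∧ y'.natAbs < y.natAbs := by
  obtain ⟨x₁, y₁, h₁, hcop, hy₁, hdvd⟩ := h.exists_isCoprime hy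
  obtain ⟨p, q, r, s, rfl, hmul, hsq, hq, hrs⟩ :=
    exists_parameters_of_isConcordant_three_four h₁ hcop hy₁
  have hp : p ≠ 0 := by rintro rfl; simp at hy₁
  obtain ⟨x', y', h', hy'p⟩ := exists_isConcordant_dvd_of_mul_eq_mul hmul hsq hp hq hrs
  refine ⟨x', y', h', ne_zero_of_dvd_ne_zero hp hy'p, ?_⟩
  have hle : y'.natAbs ≤ p.natAbs := Int.natAbs_le_of_dvd_ne_zero hy'p hp
  have hle₂ : (2 * p).natAbs ≤ y.natAbs :=
    Int.natAbs_le_of_dvd_ne_zero ((Dvd.intro q rfl).trans hdvd) hy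
  omega

theorem eq_zero_of_isConcordant_three_four (h : IsConcordant 3 4 x y) : y = 0 := by
  by_contra hy
  induction hn : y.natAbs using Nat.strong_induction_on generalizing x y with
  | _ n ih =>
    obtain ⟨x', y', h', hy', hlt⟩ := exists_natAbs_lt_of_isConcordant_three_four h hy
    exact ih _ (hn ▸ hlt) h' hy' rfl

theorem mul_sq_sub_sq_eq_zero_of_isSquare (h : IsSquare (x ^ 4 + 34 * x ^ 2 * y ^ 2 + y ^ 4)) :
    x * y * (x ^ 2 - y ^ 2) = 0 := by
  obtain ⟨z, hz⟩ := h
  -- With `A = (x² - y²)²` and `B = (xy)²`, the quartic is `A + 36B`, and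
  -- `(A - 12B)² + 3 * 16AB = (A + 12B)²`, `(A - 12B)² + 4 * 16AB = (A + 4B)(A + 36B)`,
  -- where `A + 4B = (x² + y²)²`.
  have concordant : IsConcordant 3 4 ((x ^ 2 - y ^ 2) ^ 2 - 12 * (x * y) ^ 2)
      (4 * (x * y * (x ^ 2 - y ^ 2))) :=
    ⟨⟨(x ^ 2 - y ^ 2) ^ 2 + 12 * (x * y) ^ 2, by ring⟩,
      ⟨(x ^ 2 + y ^ 2) * z, by linear_combination (x ^ 2 + y ^ 2) ^ 2 * hz⟩⟩
  simpa using eq_zero_of_isConcordant_three_four concordant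

end Concordant

section MonicQuadratic

variable {R : Type*} [CommRing R]

theorem monic_X_sq_add_C_mul_X_add_C (b c : R) : (X ^ 2 + C b * X + C c).Monic := by
  rw [add_assoc]
  exact monic_X_pow_add degree_linear_lt

theorem degree_X_sq_add_C_mul_X_add_C [Nontrivial R] (b c : R) :
    (X ^ 2 + C b * X + C c).degree = 2 := by
  simpa using degree_quadratic (b := b) (c := c) one_ne_zero

theorem eq_zero_of_monic_quadratic_dvd_linear {b c v w : R}
    (h : X ^ 2 + C b * X + C c ∣ C v * X + C w) : v = 0 ∧ w = 0 := by
  nontriviality R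
  have hzero : C v * X + C w = 0 := by
    by_contra hne
    refine (monic_X_sq_add_C_mul_X_add_C b c).not_dvd_of_degree_lt hne ?_ h
    exact degree_linear_lt.trans_eq (degree_X_sq_add_C_mul_X_add_C b c).symm
  exact ⟨by simpa using congrArg (coeff · 1) hzero, by simpa using congrArg (coeff · 0) hzero⟩

theorem exists_eq_quadratic_mul_add_linear (b c : R) (Q : R[X]) :
    ∃ (K : R[X]) (v w : R), Q = (X ^ 2 + C b * X + C c) * K + (C v * X + C w) := by
  nontriviality R
  have hmonic := monic_X_sq_add_C_mul_X_add_C b c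
  have hdeg : (Q %ₘ (X ^ 2 + C b * X + C c)).degree ≤ 1 :=
    Order.le_of_lt_succ
      ((degree_modByMonic_lt Q hmonic).trans_eq (degree_X_sq_add_C_mul_X_add_C b c))
  exact ⟨_, _, _, by rw [← eq_X_add_C_of_degree_le_one hdeg, add_comm, modByMonic_add_div]⟩

theorem exists_monic_quadratic_dvd [IsDomain R] {F P : R[X]} (hF : F.degree = 2)
    (hP : P.Monic) (h : F ∣ P) : ∃ b c : R, X ^ 2 + C b * X + C c ∣ P := by
  obtain ⟨ℓ, hℓ⟩ := hP.isUnit_leadingCoeff_of_dvd h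
  have hF_eq : F = C (ℓ : R) * X ^ 2 + C (F.coeff 1) * X + C (F.coeff 0) := by
    rw [hℓ, leadingCoeff, natDegree_eq_of_degree_eq_some hF]
    exact eq_quadratic_of_degree_le_two hF.le
  refine ⟨↑ℓ⁻¹ * F.coeff 1, ↑ℓ⁻¹ * F.coeff 0, ?_⟩
  have hassoc : C (ℓ : R) * (X ^ 2 + C (↑ℓ⁻¹ * F.coeff 1) * X + C (↑ℓ⁻¹ * F.coeff 0)) = F := by
    conv_rhs => rw [hF_eq]
    simp only [mul_add, ← mul_assoc, ← C_mul, Units.mul_inv, one_mul]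
  exact (Dvd.intro_left _ hassoc).trans h

theorem exists_coeff_of_monic_quadratic_dvd_quartic {e k p q r s : R}
    (h : X ^ 2 + C e * X + C k ∣ X ^ 4 + C p * X ^ 3 + C q * X ^ 2 + C r * X + C s) :
    ∃ f g, e + f = p ∧ k + e * f + g = q ∧ e * g + k * f = r ∧ k * g = s := by
  obtain ⟨f, hf⟩ : ∃ f, e + f = p := ⟨p - e, by ring⟩
  obtain ⟨g, hg⟩ : ∃ g, k + e * f + g = q := ⟨q - k - e * f, by ring⟩
  have hrem : X ^ 2 + C e * X + C k ∣ C (r - (e * g + k * f)) * X + C (s - k * g) := by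
    convert h.sub (dvd_mul_right _ (X ^ 2 + C f * X + C g)) using 1
    simp only [← hf, ← hg, C_add, C_sub, C_mul]
    ring
  obtain ⟨hr, hs⟩ := eq_zero_of_monic_quadratic_dvd_linear hrem
  exact ⟨f, g, hf, hg, (sub_eq_zero.mp hr).symm, (sub_eq_zero.mp hs).symm⟩

/- `X² + (2c - b²)X + c²` is the Graeffe transform of `X² + bX + c`: substituting `X²` into it
gives `(X² + bX + c)(X² - bX + c)`. -/
theorem isRoot_or_graeffe_dvd_of_dvd_expand_two [NoZeroDivisors R] {b c : R} {Q : R[X]}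
    (h : X ^ 2 + C b * X + C c ∣ expand R 2 Q) :
    Q.IsRoot (-c) ∨ X ^ 2 + C (2 * c - b ^ 2) * X + C (c ^ 2) ∣ Q := by
  obtain ⟨K, v, w, hQ⟩ := exists_eq_quadratic_mul_add_linear (2 * c - b ^ 2) (c ^ 2) Q
  have hdvd : X ^ 2 + C b * X + C c ∣ C (-(b * v)) * X + C (w - c * v) := by
    have hprod : X ^ 2 + C b * X + C c ∣
        (X ^ 2 + C b * X + C c) * ((X ^ 2 - C b * X + C c) * expand R 2 K + C v) :=
      dvd_mul_right _ _
    convert h.sub hprod using 1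
    simp only [hQ, map_add, map_mul, map_pow, map_sub, map_neg, expand_X, expand_C, map_ofNat]
    ring
  obtain ⟨hbv, hw⟩ := eq_zero_of_monic_quadratic_dvd_linear hdvd
  rcases mul_eq_zero.mp (neg_eq_zero.mp hbv) with rfl | rfl
  · left
    simp only [hQ, IsRoot.def, eval_add, eval_mul, eval_pow, eval_X, eval_C]
    linear_combination hw
  · right
    obtain rfl : w = 0 := by simpa using hw
    exact ⟨K, by simpa using hQ⟩

end MonicQuadratic

section Cuboid

/-- The quartic whose value at `t²` is the cuboid polynomial, in terms of `Δ = u² - a²` and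
`m = a u`. -/
noncomputable def cuboidQuartic (Δ m : ℤ) : ℤ[X] :=
  X ^ 4 + C (6 * Δ) * X ^ 3 + C (Δ ^ 2 - 2 * m ^ 2) * X ^ 2 + C (-(6 * Δ * m ^ 2)) * X + C (m ^ 4)

theorem cuboidPoly_eq_expand_cuboidQuartic (a u : ℤ) :
    cuboidPoly a u = expand ℤ 2 (cuboidQuartic (u ^ 2 - a ^ 2) (a * u)) := by
  simp only [cuboidPoly, cuboidQuartic, map_add, map_mul, map_pow, map_sub, map_neg, expand_X,
    expand_C, map_ofNat]
  ring

theorem cuboidPoly_monic (a u : ℤ) : (cuboidPoly a u).Monic := by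
  rw [cuboidPoly]
  monicity!

variable {Δ m : ℤ}

theorem cuboidQuartic_eval (Δ m s : ℤ) :
    (cuboidQuartic Δ m).eval s = (s ^ 2 + 3 * Δ * s - m ^ 2) ^ 2 - (2 * Δ * s) ^ 2 * 2 := by
  simp only [cuboidQuartic, eval_add, eval_mul, eval_pow, eval_X, eval_C]
  ring

theorem cuboidQuartic_not_isRoot (hΔ : Δ ≠ 0) (hm : m ≠ 0) (s : ℤ) :
    ¬ (cuboidQuartic Δ m).IsRoot s := by
  intro h
  rw [IsRoot.def, cuboidQuartic_eval, sub_eq_zero] at h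
  have hs : s ≠ 0 := by rintro rfl; simp [hm] at h
  have two_isSquare : IsSquare (2 : ℤ) :=
    isSquare_of_isSquare_sq_mul (by positivity) (h ▸ IsSquare.sq _)
  exact Int.prime_two.irreducible.not_isSquare two_isSquare

theorem relations_of_quadratic_dvd_cuboidQuartic {e c : ℤ} (hm : m ≠ 0)
    (h : X ^ 2 + C e * X + C (c ^ 2) ∣ cuboidQuartic Δ m) :
    c ≠ 0 ∧ e * (c ^ 2 - m ^ 2) = 6 * Δ * c ^ 2 ∧
      (c ^ 2 + m ^ 2) ^ 2 = m ^ 2 * e ^ 2 + Δ ^ 2 * c ^ 2 := by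
  obtain ⟨f, g, h₃, h₂, h₁, h₀⟩ := exists_coeff_of_monic_quadratic_dvd_quartic h
  have hc : c ≠ 0 := by rintro rfl; exact hm (by simpa using h₀.symm)
  have hef : e * m ^ 2 + c ^ 2 * f = 0 := by
    refine (mul_eq_zero.mp ?_).resolve_left (by positivity : c ^ 2 + m ^ 2 ≠ 0)
    linear_combination c ^ 2 * h₁ - e * h₀ + c ^ 2 * m ^ 2 * h₃
  exact ⟨hc, by linear_combination c ^ 2 * h₃ - hef,
    by linear_combination c ^ 2 * h₂ - h₀ - e * hef⟩

theorem quadratic_not_dvd_cuboidQuartic (hΔ : Δ ≠ 0) (hm : m ≠ 0) (e c : ℤ) :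
    ¬ X ^ 2 + C e * X + C (c ^ 2) ∣ cuboidQuartic Δ m := by
  intro h
  obtain ⟨hc, hlin, hsq⟩ := relations_of_quadratic_dvd_cuboidQuartic hm h
  have hprod : e * (c ^ 2 - m ^ 2) ≠ 0 := hlin ▸ by positivity
  have quartic_isSquare : IsSquare (c ^ 4 + 34 * c ^ 2 * m ^ 2 + m ^ 4) := by
    refine isSquare_of_isSquare_sq_mul (left_ne_zero_of_mul hprod) ⟨6 * c * (c ^ 2 + m ^ 2), ?_⟩
    linear_combination (e * (c ^ 2 - m ^ 2) + 6 * Δ * c ^ 2) * hlin - 36 * c ^ 2 * hsq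
  exact mul_ne_zero (mul_ne_zero hc hm) (right_ne_zero_of_mul hprod)
    (mul_sq_sub_sq_eq_zero_of_isSquare quartic_isSquare)

end Cuboid

theorem cuboidPoly_no_2_6_factorization_general (a u : ℤ) (ha : a ≠ 0) (hu : u ≠ 0)
    (hne : a ^ 2 ≠ u ^ 2) : ¬ ∃ F : ℤ[X], F.degree = 2 ∧ F ∣ cuboidPoly a u := by
  rintro ⟨F, hF, hdvd⟩
  obtain ⟨b, c, hbc⟩ := exists_monic_quadratic_dvd hF (cuboidPoly_monic a u) hdvd
  have hΔ : u ^ 2 - a ^ 2 ≠ 0 := sub_ne_zero.mpr hne.symm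
  have hm : a * u ≠ 0 := mul_ne_zero ha hu
  rw [cuboidPoly_eq_expand_cuboidQuartic] at hbc
  rcases isRoot_or_graeffe_dvd_of_dvd_expand_two hbc with hroot | hfactor
  · exact cuboidQuartic_not_isRoot hΔ hm _ hroot
  · exact quadratic_not_dvd_cuboidQuartic hΔ hm _ _ hfactor

theorem cuboidPoly_no_2_6_factorization (a u : ℤ) (ha : 0 < a) (hu : 0 < u)
    (hco : IsCoprime a u) (hne : a ≠ u) :
    ¬ ∃ F G : Polynomial ℤ, F.degree = 2 ∧ G.degree = 6 ∧ cuboidPoly a u = F * G := by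
  rintro ⟨F, G, hF, -, h⟩
  exact cuboidPoly_no_2_6_factorization_general a u ha.ne' hu.ne'
    (fun hsq ↦ hne ((sq_eq_sq₀ ha.le hu.le).mp hsq)) ⟨F, hF, Dvd.intro G h.symm⟩
end

section
/- For any coprime positive integers a and u with a ≠ u, the cuboid polynomial P_{a,u}(t) does not admit any factorization in ℤ[t] as a product of two degree-2 polynomials and a degree-4 polynomial, nor as a product of four degree-2 polynomials, nor as a product of two degree-3 polynomials and a degree-2 polynomial. -/
open Polynomial

/-!
Write `Δ = u² - a²` and `w = a u`. Then `P(t) = (t⁴ + 3Δt² - w²)² - 8Δ²t⁴`, and it suffices to see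
that `P` has no quadratic factor `t² + bt + c`.

For a root `τ` of such a factor, `s = τ²` satisfies `s² - ks + n = 0` with `k = b² - 2c`, `n = c²`.
If `b = 0`, then `s` is an integer and `P(τ) = 0` makes `8` a rational square. Otherwise,
`P(τ) = 0` reduces to a linear relation for `s` whose coefficients vanish, and eliminating `Δ`
gives `k²(c⁴ + 34c²w² + w⁴) = 36c²(c² + w²)²`. A rational point on `z² = x⁴ + 34x²y² + y⁴` maps to
`S = z(x² + y²)`, `T = 4xy(x² - y²)`, for which `S² - T²` and `S² - 4T²` are both squares.

That forces `T = 0` by infinite descent: if `S` and `T` are coprime, then parametrizing both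
Pythagorean triples gives `S = p² + q² = p'² + 4q'²` and `T = 2pq = 2p'q'`; refining `pq = p'q'` to
`p = αβ`, `q = γδ`, `p' = αγ`, `q' = βδ` yields `α² - δ² = β²`, `α² - 4δ² = γ²` with `|δ| < |T|`.
-/

section Squares

theorem isSquare_of_isSquare_sq_mul_s16 {R : Type*} [CommRing R] [IsDomain R] [IsIntegrallyClosed R]
    {g x : R} (hg : g ≠ 0) (h : IsSquare (g ^ 2 * x)) : IsSquare x := by
  obtain ⟨r, hr⟩ := h
  have hgr : g ∣ r := by
    rw [← IsIntegrallyClosed.pow_dvd_pow_iff two_ne_zero]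
    exact ⟨x, by rw [hr, sq]⟩
  obtain ⟨y, rfl⟩ := hgr
  exact ⟨y, mul_left_cancel₀ (pow_ne_zero 2 hg) (by linear_combination hr)⟩

theorem eq_zero_of_sq_eq_eight_mul_sq {x y : ℤ} (h : x ^ 2 = 8 * y ^ 2) : y = 0 := by
  have : Zsqrtd.Nonsquare 8 := ⟨fun n hn => by
    have : n < 3 := by nlinarith
    interval_cases n <;> omega⟩
  exact (Zsqrtd.divides_sq_eq_zero_z (d := 8) (x := x) (y := y)
    (by push_cast; linear_combination h)).2

theorem four_dvd_sq_of_even {x : ℤ} (hx : Even x) : 4 ∣ x ^ 2 := by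
  simpa using pow_dvd_pow_of_dvd hx.two_dvd 2

end Squares

section Factorization

theorem exists_four_factors_of_mul_eq_mul {M : Type*} [CommMonoidWithZero M] [IsCancelMulZero M]
    [DecompositionMonoid M] {p q r s : M} (hp : p ≠ 0) (h : p * q = r * s) :
    ∃ α β γ δ : M, p = α * β ∧ q = γ * δ ∧ r = α * γ ∧ s = β * δ := by
  obtain ⟨α, β, ⟨γ, rfl⟩, ⟨δ, rfl⟩, rfl⟩ := exists_dvd_and_dvd_of_dvd_mul (Dvd.intro q h)
  exact ⟨α, β, γ, δ, rfl, mul_left_cancel₀ hp (by rw [h, mul_mul_mul_comm]), rfl, rfl⟩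

theorem exists_mul_of_mul_eq_mul_of_isCoprime {R : Type*} [CommRing R] [IsDomain R]
    {a b x y : R} (ha : a ≠ 0) (hab : IsCoprime a b) (h : a * x = b * y) :
    ∃ t, x = b * t ∧ y = a * t := by
  obtain ⟨t, rfl⟩ := hab.dvd_of_dvd_mul_left (Dvd.intro x h)
  exact ⟨t, mul_left_cancel₀ ha (by linear_combination h), rfl⟩

theorem dvd_of_dvd_mul_of_dvd_mul_of_isCoprime {R : Type*} [CommRing R] {d e x y : R}
    (hxy : IsCoprime x y) (hx : d ∣ e * x) (hy : d ∣ e * y) : d ∣ e := by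
  obtain ⟨i, j, hij⟩ := hxy
  have hcomb : e = i * (e * x) + j * (e * y) := by linear_combination -e * hij
  rw [hcomb]
  exact (hx.mul_left i).add (hy.mul_left j)

end Factorization

/-- The pairs `(S, T)` for which the two quadratic forms `S² - T²` and `S² - 4T²`, concordant in
Euler's sense, are simultaneously squares. They are the rational points on a genus-one curve on
which the descent takes place. -/
def ConcordantPair (S T : ℤ) : Prop :=
  IsSquare (S ^ 2 - T ^ 2) ∧ IsSquare (S ^ 2 - 4 * T ^ 2)

namespace ConcordantPair

variable {S T : ℤ}

theorem abs_left (h : ConcordantPair S T) : ConcordantPair |S| T := by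
  simpa only [ConcordantPair, sq_abs] using h

theorem of_mul_right {g : ℤ} (hg : g ≠ 0) (h : ConcordantPair (S * g) (T * g)) :
    ConcordantPair S T := by
  refine ⟨isSquare_of_isSquare_sq_mul_s16 hg ?_, isSquare_of_isSquare_sq_mul_s16 hg ?_⟩
  · rw [show g ^ 2 * (S ^ 2 - T ^ 2) = (S * g) ^ 2 - (T * g) ^ 2 by ring]
    exact h.1
  · rw [show g ^ 2 * (S ^ 2 - 4 * T ^ 2) = (S * g) ^ 2 - 4 * (T * g) ^ 2 by ring]
    exact h.2

theorem left_ne_zero (h : ConcordantPair S T) (hT : T ≠ 0) : S ≠ 0 := by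
  rintro rfl
  have hnonneg := h.1.nonneg
  have hpos : 0 < T ^ 2 := by positivity
  linarith

theorem odd_left (h : ConcordantPair S T) (hST : IsCoprime S T) : Odd S := by
  by_contra hS
  rw [Int.not_odd_iff_even] at hS
  have hT : Odd T := Int.isCoprime_two_left.mp (hST.of_isCoprime_of_dvd_left hS.two_dvd)
  obtain ⟨w, hw⟩ := h.1
  have hS4 := four_dvd_sq_of_even hS
  have hT4 := Int.sq_mod_four_eq_one_of_odd hT
  rw [← sq] at hw
  rcases Int.even_or_odd w with hw' | hw'
  · have := four_dvd_sq_of_even hw'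
    omega
  · have := Int.sq_mod_four_eq_one_of_odd hw'
    omega

theorem even_right (h : ConcordantPair S T) (hST : IsCoprime S T) : Even T := by
  have hS := h.odd_left hST
  obtain ⟨v, hv⟩ := h.2
  have hv_odd : Odd v := by
    have : Odd (v * v) := hv ▸ hS.pow.sub_even ⟨2 * T ^ 2, by ring⟩
    exact (Int.odd_mul.mp this).1
  have hS8 := Int.eight_dvd_sq_sub_one_of_odd hS
  have hv8 := Int.eight_dvd_sq_sub_one_of_odd hv_odd
  by_contra hT
  have hT8 := Int.eight_dvd_sq_sub_one_of_odd (Int.not_even_iff_odd.mp hT)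
  rw [← sq] at hv
  omega

end ConcordantPair

theorem exists_odd_even_of_isSquare_sq_sub_sq {S T : ℤ} (hpos : 0 < S) (hST : IsCoprime S T)
    (hS : Odd S) (hT : Even T) (h : IsSquare (S ^ 2 - T ^ 2)) :
    ∃ p q : ℤ, Odd p ∧ Even q ∧ IsCoprime p q ∧ T = 2 * p * q ∧ S = p ^ 2 + q ^ 2 := by
  obtain ⟨w, hw⟩ := h
  have hw_odd : Odd w := by
    have : Odd (w * w) := hw ▸ hS.pow.sub_even (hT.pow_of_ne_zero two_ne_zero)
    exact (Int.odd_mul.mp this).1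
  have hwT : IsCoprime w T := by
    have hsq : IsCoprime (S ^ 2 + T * -T) T := hST.pow_left.add_mul_left_left _
    have hww : S ^ 2 + T * -T = w * w := by linear_combination hw
    exact (hww ▸ hsq).of_mul_left_left
  have htriple : PythagoreanTriple w T S := by
    rw [PythagoreanTriple]
    linear_combination -hw
  obtain ⟨m, n, -, hTmn, hSmn, hmn, hparity, -⟩ := htriple.coprime_classification'
    (Int.isCoprime_iff_gcd_eq_one.mp hwT) (Int.odd_iff.mp hw_odd) hpos
  rw [← Int.isCoprime_iff_gcd_eq_one] at hmn
  rcases hparity with ⟨hm, hn⟩ | ⟨hm, hn⟩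
  · exact ⟨n, m, Int.odd_iff.mpr hn, Int.even_iff.mpr hm, hmn.symm, by rw [hTmn]; ring,
      by rw [hSmn]; ring⟩
  · exact ⟨m, n, Int.odd_iff.mpr hm, Int.even_iff.mpr hn, hmn, hTmn, hSmn⟩

theorem eq_one_of_dvd_three_of_emod_eight {h : ℤ} (h3 : h ∣ 3) (h8 : h % 8 = 1) : h = 1 := by
  have hle := Int.le_of_dvd three_pos h3
  have hge := Int.le_of_dvd three_pos (neg_dvd.mpr h3)
  omega

theorem concordantPair_of_mul_eq_mul {α β γ δ : ℤ} (hβγ : IsCoprime β γ) (hαδ : IsCoprime α δ)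
    (hβ : β ≠ 0) (hα : Odd α) (hγ : Odd γ) (hδ : Even δ)
    (h : β ^ 2 * (α ^ 2 - 4 * δ ^ 2) = γ ^ 2 * (α ^ 2 - δ ^ 2)) : ConcordantPair α δ := by
  obtain ⟨t, hγt, hβt⟩ := exists_mul_of_mul_eq_mul_of_isCoprime (pow_ne_zero 2 hβ) hβγ.pow h
  have ht3 : t ∣ 3 := dvd_of_dvd_mul_of_dvd_mul_of_isCoprime (hαδ.pow (m := 2) (n := 2))
    ⟨4 * β ^ 2 - γ ^ 2, by linear_combination 4 * hβt - hγt⟩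
    ⟨β ^ 2 - γ ^ 2, by linear_combination hβt - hγt⟩
  have ht8 : t % 8 = 1 := by
    have hα8 := Int.eight_dvd_sq_sub_one_of_odd hα
    have hγ8 := (Int.eight_dvd_sq_sub_one_of_odd hγ).mul_right t
    have hδ4 := four_dvd_sq_of_even hδ
    have hsub : (γ ^ 2 - 1) * t = α ^ 2 - 4 * δ ^ 2 - t := by linear_combination -hγt
    omega
  obtain rfl := eq_one_of_dvd_three_of_emod_eight ht3 ht8
  exact ⟨⟨β, by linear_combination hβt⟩, ⟨γ, by linear_combination hγt⟩⟩

namespace ConcordantPair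

variable {S T : ℤ}

theorem exists_mul_eq_mul_of_isCoprime (h : ConcordantPair S T) (hST : IsCoprime S T)
    (hpos : 0 < S) :
    ∃ α β γ δ : ℤ, Odd (α * β) ∧ Odd γ ∧ Even δ ∧ IsCoprime β γ ∧ IsCoprime α δ ∧
      T = 2 * (α * β * γ) * δ ∧
      β ^ 2 * (α ^ 2 - 4 * δ ^ 2) = γ ^ 2 * (α ^ 2 - δ ^ 2) := by
  have hS_odd := h.odd_left hST
  have hS2T : IsCoprime S (2 * T) := (Int.isCoprime_two_right.mpr hS_odd).mul_right hST
  obtain ⟨p, q, hp, hq, hpq, hT, hS⟩ :=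
    exists_odd_even_of_isSquare_sq_sub_sq hpos hST hS_odd (h.even_right hST) h.1
  obtain ⟨p', r, hp', ⟨q', rfl⟩, hpq', hT', hS'⟩ :=
    exists_odd_even_of_isSquare_sq_sub_sq hpos hS2T hS_odd (even_two_mul T)
      (by simpa only [mul_pow, show (2 : ℤ) ^ 2 = 4 by rfl] using h.2)
  have hp0 : p ≠ 0 := by rintro rfl; simp at hp
  have hmul : p * q = p' * q' := by linarith
  obtain ⟨α, β, γ, δ, rfl, rfl, rfl, rfl⟩ := exists_four_factors_of_mul_eq_mul hp0 hmul
  have hγ : Odd γ := (Int.odd_mul.mp hp').2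
  have hδ : Even δ := (Int.even_mul.mp hq).resolve_left (Int.not_even_iff_odd.mpr hγ)
  have hβγ : IsCoprime β γ := hpq.of_mul_left_right.of_mul_right_left
  have hαδ : IsCoprime α δ := by
    rw [← two_mul] at hpq'
    exact hpq'.of_mul_left_left.of_mul_right_right.of_mul_right_right
  exact ⟨α, β, γ, δ, hp, hγ, hδ, hβγ, hαδ, by rw [hT]; ring, by linear_combination hS' - hS⟩

theorem exists_natAbs_lt_of_isCoprime (h : ConcordantPair S T) (hST : IsCoprime S T)
    (hpos : 0 < S) (hT : T ≠ 0) :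
    ∃ α δ : ℤ, ConcordantPair α δ ∧ δ ≠ 0 ∧ δ.natAbs < T.natAbs := by
  obtain ⟨α, β, γ, δ, hαβ, hγ, hδ, hβγ, hαδ, rfl, hmul⟩ :=
    h.exists_mul_eq_mul_of_isCoprime hST hpos
  obtain ⟨hα, hβ⟩ := Int.odd_mul.mp hαβ
  have hβ0 : β ≠ 0 := by rintro rfl; simp at hβ
  have hδ0 : δ ≠ 0 := right_ne_zero_of_mul hT
  refine ⟨α, δ, concordantPair_of_mul_eq_mul hβγ hαδ hβ0 hα hγ hδ hmul, hδ0, ?_⟩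
  have hαβγ : 0 < (α * β * γ).natAbs :=
    Int.natAbs_pos.mpr (right_ne_zero_of_mul (left_ne_zero_of_mul hT))
  rw [Int.natAbs_mul, Int.natAbs_mul]
  exact lt_mul_of_one_lt_left (Int.natAbs_pos.mpr hδ0) (by lia)

theorem exists_natAbs_lt (h : ConcordantPair S T) (hT : T ≠ 0) :
    ∃ α δ : ℤ, ConcordantPair α δ ∧ δ ≠ 0 ∧ δ.natAbs < T.natAbs := by
  obtain ⟨g, S', T', hg, hgcd, rfl, rfl⟩ :=
    Int.exists_gcd_one' (Int.gcd_pos_of_ne_zero_right S hT)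
  have hg0 : (g : ℤ) ≠ 0 := by exact_mod_cast hg.ne'
  have h' : ConcordantPair S' T' := h.of_mul_right hg0
  have hT' : T' ≠ 0 := left_ne_zero_of_mul hT
  obtain ⟨α, δ, hconc, hδ, hlt⟩ := h'.abs_left.exists_natAbs_lt_of_isCoprime
    (Int.isCoprime_iff_gcd_eq_one.mpr hgcd).abs_left (abs_pos.mpr (h'.left_ne_zero hT')) hT'
  refine ⟨α, δ, hconc, hδ, hlt.trans_le ?_⟩
  rw [Int.natAbs_mul, Int.natAbs_natCast]
  exact Nat.le_mul_of_pos_right _ hg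

theorem right_eq_zero (h : ConcordantPair S T) : T = 0 := by
  induction hN : T.natAbs using Nat.strong_induction_on generalizing S T with
  | _ N ih =>
    by_contra hT
    obtain ⟨α, δ, hconc, hδ, hlt⟩ := h.exists_natAbs_lt hT
    exact hδ (ih δ.natAbs (hN ▸ hlt) hconc rfl)

end ConcordantPair

theorem mul_eq_zero_of_sq_mul_quartic_eq_sq {k x y z : ℤ}
    (h : k ^ 2 * (x ^ 4 + 34 * x ^ 2 * y ^ 2 + y ^ 4) = z ^ 2) :
    x * y * (k * (y ^ 2 - x ^ 2)) = 0 := by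
  have hconc : ConcordantPair (z * (x ^ 2 + y ^ 2)) (4 * (x * y * (k * (y ^ 2 - x ^ 2)))) :=
    ⟨⟨k * (x ^ 4 + 10 * x ^ 2 * y ^ 2 + y ^ 4), by linear_combination -(x ^ 2 + y ^ 2) ^ 2 * h⟩,
      ⟨k * (x ^ 4 - 14 * x ^ 2 * y ^ 2 + y ^ 4), by linear_combination -(x ^ 2 + y ^ 2) ^ 2 * h⟩⟩
  exact (mul_eq_zero.mp hconc.right_eq_zero).resolve_left four_ne_zero

section QuadraticDivisors

variable {R : Type*} [CommRing R]

theorem dvd_linear_of_dvd_quadratic_of_dvd_quartic {d s k n m Δ : R}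
    (hquad : d ∣ s ^ 2 - k * s + n)
    (hquart : d ∣ (s ^ 2 + 3 * Δ * s - m) ^ 2 - 8 * (Δ * s) ^ 2) :
    d ∣ (n + m) * (6 * Δ * n - k * (m - n)) * s +
      ((3 * Δ * n - m * k) ^ 2 - n * (n + m) ^ 2 - 8 * (Δ * n) ^ 2) := by
  set L := (n + m) * s + (3 * Δ * n - m * k)
  -- Modulo `d`, the conjugate `k - s` of `s` satisfies `(k - s) * s = n`.
  have hconj : d ∣ (k - s) * s - n := by
    convert hquad.neg_right using 1
    ring
  have hL : d ∣ (k - s) * (s ^ 2 + 3 * Δ * s - m) - L := by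
    convert hconj.mul_left (s + 3 * Δ) using 1
    ring
  have hL_sq : d ∣ L ^ 2 - 8 * (Δ * n) ^ 2 := by
    convert ((hquart.mul_left ((k - s) ^ 2)).sub (hL.mul_right
      ((k - s) * (s ^ 2 + 3 * Δ * s - m) + L))).add
      (hconj.mul_left (8 * Δ ^ 2 * ((k - s) * s + n))) using 1
    ring
  convert hL_sq.sub (hquad.mul_left ((n + m) ^ 2)) using 1
  ring

theorem sq_mul_eq_of_linear_coeffs_eq_zero {k n m Δ : R}
    (h₁ : 6 * Δ * n = k * (m - n))
    (h₀ : (3 * Δ * n - m * k) ^ 2 - n * (n + m) ^ 2 - 8 * (Δ * n) ^ 2 = 0) :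
    k ^ 2 * (n ^ 2 + 34 * n * m + m ^ 2) = 36 * n * (n + m) ^ 2 := by
  linear_combination 36 * h₀ - (6 * Δ * n + k * (m - n) - 36 * (m * k)) * h₁

theorem mul_eq_zero_and_eq_mul_of_quadratic_dvd {b c e f : R}
    (h : X ^ 2 + C b * X + C c ∣ C e * X ^ 2 + C f) : e * b = 0 ∧ f = e * c := by
  nontriviality R
  have hlinear : X ^ 2 + C b * X + C c ∣ C (-(e * b)) * X + C (f - e * c) := by
    have := dvd_sub h (dvd_mul_left _ (C e))
    convert this using 1
    simp only [map_neg, map_mul, map_sub]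
    ring
  have hmonic := isMonicOfDegree_add_add_two b c
  have hzero : C (-(e * b)) * X + C (f - e * c) = 0 := by
    by_contra hne
    refine hmonic.monic.not_dvd_of_natDegree_lt hne ?_ hlinear
    rw [hmonic.natDegree_eq]
    exact natDegree_linear_le.trans_lt one_lt_two
  have h1 := congrArg (coeff · 1) hzero
  have h0 := congrArg (coeff · 0) hzero
  exact ⟨by simpa using h1, by simpa [sub_eq_zero] using h0⟩

theorem exists_isMonicOfDegree_dvd_of_dvd_monic [IsDomain R] {P Q : R[X]} (hP : P.Monic)
    (hQ : Q ∣ P) : ∃ Q' : R[X], IsMonicOfDegree Q' Q.natDegree ∧ Q' ∣ P := by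
  obtain ⟨v, hv⟩ := hP.isUnit_leadingCoeff_of_dvd hQ
  have hinv : (↑v⁻¹ : R) * Q.leadingCoeff = 1 := by rw [← hv, Units.inv_mul]
  refine ⟨C ↑v⁻¹ * Q, ⟨?_, monic_C_mul_of_mul_leadingCoeff_eq_one hinv⟩, ?_⟩
  · exact natDegree_C_mul_of_mul_ne_zero (hinv.symm ▸ one_ne_zero)
  · exact (isUnit_C.mpr (Units.isUnit _)).mul_left_dvd.mpr hQ

/-- The even octic `(t⁴ + 3Δt² - m)² - 8Δ²t⁴`, of which the cuboid polynomial is the case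
`Δ = u² - a²`, `m = a²u²`. It is written in powers of `t²` because its quadratic factors are
studied through the squares of their roots. -/
noncomputable def evenOctic (Δ m : R) : R[X] :=
  ((X ^ 2) ^ 2 + 3 * C Δ * X ^ 2 - C m) ^ 2 - 8 * (C Δ * X ^ 2) ^ 2

theorem evenOctic_monic (Δ m : R) : (evenOctic Δ m).Monic := by
  nontriviality R
  rw [evenOctic]
  monicity!

theorem mul_eq_zero_and_eq_mul_of_quadratic_dvd_evenOctic {b c Δ m : R}
    (h : X ^ 2 + C b * X + C c ∣ evenOctic Δ m) :
    (c ^ 2 + m) * (6 * Δ * c ^ 2 - (b ^ 2 - 2 * c) * (m - c ^ 2)) * b = 0 ∧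
    (3 * Δ * c ^ 2 - m * (b ^ 2 - 2 * c)) ^ 2 - c ^ 2 * (c ^ 2 + m) ^ 2 - 8 * (Δ * c ^ 2) ^ 2 =
      (c ^ 2 + m) * (6 * Δ * c ^ 2 - (b ^ 2 - 2 * c) * (m - c ^ 2)) * c := by
  have hnorm : X ^ 2 + C b * X + C c ∣ (X ^ 2) ^ 2 - C (b ^ 2 - 2 * c) * X ^ 2 + C (c ^ 2) := by
    refine ⟨X ^ 2 - C b * X + C c, ?_⟩
    simp only [map_sub, map_mul, map_pow, C_ofNat]
    ring
  apply mul_eq_zero_and_eq_mul_of_quadratic_dvd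
  convert dvd_linear_of_dvd_quadratic_of_dvd_quartic hnorm h using 1
  simp only [map_sub, map_mul, map_pow, map_add, C_ofNat]

theorem dvd_sq_of_quadratic_dvd_evenOctic {b c Δ m : R}
    (h : X ^ 2 + C b * X + C c ∣ evenOctic Δ m) : c ∣ m ^ 2 := by
  simpa [evenOctic] using map_dvd (evalRingHom 0) h

end QuadraticDivisors

section Integers

variable {Δ w : ℤ}

theorem not_quadratic_dvd_evenOctic (hΔ : Δ ≠ 0) (hw : w ≠ 0) (b c : ℤ) :
    ¬ X ^ 2 + C b * X + C c ∣ evenOctic Δ (w ^ 2) := by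
  intro h
  have hc : c ≠ 0 := by
    rintro rfl
    exact hw (by simpa using dvd_sq_of_quadratic_dvd_evenOctic h)
  obtain ⟨h₁, h₀⟩ := mul_eq_zero_and_eq_mul_of_quadratic_dvd_evenOctic h
  rcases mul_eq_zero.mp h₁ with h₁ | rfl
  · rw [h₁, zero_mul] at h₀
    have hpos : c ^ 2 + w ^ 2 ≠ 0 := by positivity
    have hk := sub_eq_zero.mp ((mul_eq_zero.mp h₁).resolve_left hpos)
    have hquartic := mul_eq_zero_of_sq_mul_quartic_eq_sq (k := b ^ 2 - 2 * c) (x := c) (y := w)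
      (z := 6 * c * (c ^ 2 + w ^ 2))
      (by linear_combination sq_mul_eq_of_linear_coeffs_eq_zero hk h₀)
    rw [← hk] at hquartic
    have hne : c * w * (6 * Δ * c ^ 2) ≠ 0 := by positivity
    exact hne hquartic
  · have hsq : (c ^ 2 - 3 * Δ * c - w ^ 2) ^ 2 = 8 * (Δ * c) ^ 2 :=
      mul_left_cancel₀ (pow_ne_zero 2 hc) (by linear_combination h₀)
    exact mul_ne_zero hΔ hc (eq_zero_of_sq_eq_eight_mul_sq hsq)

theorem not_dvd_evenOctic_of_natDegree_eq_two (hΔ : Δ ≠ 0) (hw : w ≠ 0) {Q : ℤ[X]}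
    (hQ : Q.natDegree = 2) : ¬ Q ∣ evenOctic Δ (w ^ 2) := by
  intro h
  obtain ⟨Q', hQ', hdvd⟩ := exists_isMonicOfDegree_dvd_of_dvd_monic (evenOctic_monic _ _) h
  obtain ⟨b, c, rfl⟩ := isMonicOfDegree_two_iff.mp (hQ ▸ hQ')
  exact not_quadratic_dvd_evenOctic hΔ hw b c hdvd

end Integers

theorem cuboidPoly_eq_evenOctic (a u : ℤ) :
    cuboidPoly a u = evenOctic (u ^ 2 - a ^ 2) ((a * u) ^ 2) := by
  simp only [cuboidPoly, evenOctic, map_sub, map_mul, map_pow, map_neg, C_ofNat]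
  ring

theorem cuboidPoly_no_other_patterns_general {a u : ℤ} (ha : a ≠ 0) (hu : u ≠ 0)
    (hne : a ^ 2 ≠ u ^ 2) {Q : ℤ[X]} (hQ : Q.degree = 2) : ¬ Q ∣ cuboidPoly a u := by
  rw [cuboidPoly_eq_evenOctic]
  exact not_dvd_evenOctic_of_natDegree_eq_two (sub_ne_zero.mpr hne.symm) (mul_ne_zero ha hu)
    (natDegree_eq_of_degree_eq_some hQ)

theorem cuboidPoly_no_other_patterns (a u : ℤ) (ha : 0 < a) (hu : 0 < u)
    (hco : IsCoprime a u) (hne : a ≠ u) :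
    (¬ ∃ Q₁ Q₂ H : Polynomial ℤ, Q₁.degree = 2 ∧ Q₂.degree = 2 ∧ H.degree = 4 ∧
        cuboidPoly a u = Q₁ * Q₂ * H) ∧
    (¬ ∃ Q₁ Q₂ Q₃ Q₄ : Polynomial ℤ, Q₁.degree = 2 ∧ Q₂.degree = 2 ∧ Q₃.degree = 2 ∧
        Q₄.degree = 2 ∧ cuboidPoly a u = Q₁ * Q₂ * Q₃ * Q₄) ∧
    (¬ ∃ F₃ G₃ Q : Polynomial ℤ, F₃.degree = 3 ∧ G₃.degree = 3 ∧ Q.degree = 2 ∧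
        cuboidPoly a u = F₃ * G₃ * Q) := by
  have hsq : a ^ 2 ≠ u ^ 2 := fun h => hne ((sq_eq_sq₀ ha.le hu.le).mp h)
  have no_quadratic {Q : ℤ[X]} := cuboidPoly_no_other_patterns_general ha.ne' hu.ne' hsq (Q := Q)
  exact ⟨fun ⟨Q₁, Q₂, H, _, hQ₂, _, h⟩ => no_quadratic hQ₂ (h ▸ (dvd_mul_left Q₂ Q₁).mul_right H),
    fun ⟨_, _, _, _, _, _, _, hQ₄, h⟩ => no_quadratic hQ₄ (h ▸ dvd_mul_left ..),
    fun ⟨_, _, _, _, _, hQ, h⟩ => no_quadratic hQ (h ▸ dvd_mul_left ..)⟩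
end
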